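/- Let k ≥ 3 be an odd natural number. For every natural number n ≥ 1, the generalized claw graph CG_k(n) and its companion CG'_k(n) are TF-cousins if and only if n is odd: there exist bijections α, β between the vertex sets such that x, y are adjacent in CG'_k(n) iff α(x), β(y) are adjacent in CG_k(n), and CG_k(n) and CG'_k(n) are not isomorphic, if and only if n is odd. -/

import Mathlib

/-- Vertices of the generalized claw graph `CG_k(n)`: circuit vertices indexed
by `ZMod (2kn)`, leaves indexed by `Fin n × Fin k`, and centres by `Fin n`. -/
inductive ClawVertK (k n : ℕ) : Type
  | circ : ZMod (2 * k * n) → ClawVertK k n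
  | leaf : Fin n → Fin k → ClawVertK k n
  | centre : Fin n → ClawVertK k n
  deriving DecidableEq

/-- Edge relation (before symmetrization) for `CG_k(n)`: a cycle `C_{2kn}` on
the circuit vertices, claw edges `c_i ~ ℓ_{i,j}`, and leaf `ℓ_{i,j}` joined to
the antipodal pair `u_{i+jn}`, `u_{i+jn+kn}`. -/
def cgRelK (k n : ℕ) : ClawVertK k n → ClawVertK k n → Prop
  | .circ m, .circ m' => m' = m + 1
  | .centre i, .leaf i' _ => i = i'
  | .leaf i j, .circ m =>
      m = ((i : ℕ) : ZMod (2 * k * n)) + ((j : ℕ) : ZMod (2 * k * n)) * ((n : ℕ) : ZMod (2 * k * n)) ∨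
      m = ((i : ℕ) : ZMod (2 * k * n)) + ((j : ℕ) : ZMod (2 * k * n)) * ((n : ℕ) : ZMod (2 * k * n))
            + ((k * n : ℕ) : ZMod (2 * k * n))
  | _, _ => False

/-- The generalized claw graph `CG_k(n)`. -/
def CGk (k n : ℕ) : SimpleGraph (ClawVertK k n) := SimpleGraph.fromRel (cgRelK k n)

/-- Edge relation (before symmetrization) for the companion `CG'_k(n)`: the
circuit is replaced by two disjoint copies of `C_{kn}`: writing a circuit index
as `s·kn + a` with `0 ≤ a < kn`, `u_{s·kn+a} ~ u_{s'·kn+a'}` iff `s = s'` and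
`a' ≡ a ± 1 (mod kn)`. -/
def cgRelK' (k n : ℕ) : ClawVertK k n → ClawVertK k n → Prop
  | .circ m, .circ m' =>
      m.val / (k * n) = m'.val / (k * n) ∧
      m'.val % (k * n) = (m.val % (k * n) + 1) % (k * n)
  | .centre i, .leaf i' _ => i = i'
  | .leaf i j, .circ m =>
      m = ((i : ℕ) : ZMod (2 * k * n)) + ((j : ℕ) : ZMod (2 * k * n)) * ((n : ℕ) : ZMod (2 * k * n)) ∨
      m = ((i : ℕ) : ZMod (2 * k * n)) + ((j : ℕ) : ZMod (2 * k * n)) * ((n : ℕ) : ZMod (2 * k * n))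
            + ((k * n : ℕ) : ZMod (2 * k * n))
  | _, _ => False

/-- The companion generalized claw graph `CG'_k(n)`. -/
def CGk' (k n : ℕ) : SimpleGraph (ClawVertK k n) := SimpleGraph.fromRel (cgRelK' k n)

/-! The half turn `u_m ↦ u_{m+kn}` is an automorphism of both graphs, and on functions that it
fixes the two adjacency operators agree. On functions that it negates, which vanish at the leaves
and centres, each operator only sees its circuit edges. There `CG'_k(n)` has the eigenvector `±1` on
its two cycles, with eigenvalue `2`, while in `CG_k(n)` a function with `f (m+1) + f (m-1) = 2 f m`
on the cycle `C_{2kn}` is constant on it, hence not negated by the half turn unless it is zero. So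
the `2`-eigenspaces have different dimensions, and the graphs are not isomorphic.

A TF-isomorphism only conjugates the squares of the adjacency operators. On functions negated by the
half turn, a `4`-eigenvector of the square for `CG_k(n)` is `2`-periodic along `C_{2kn}`, hence zero
when `kn` is even, so the same argument applies. When `kn` is odd, `u_m` and `u_{m+kn}` have
opposite parities, and sending the two cycles of `CG'_k(n)` to the two parity classes of `C_{2kn}`
turns a circuit edge into an edge followed by a half turn, which `β` can absorb.
-/

open Matrix Module.End

namespace GeneralizedClaw

section Spectral

variable {K V W : Type*} [Field K] [Fintype V] [DecidableEq V] [Fintype W] [DecidableEq W]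

theorem finrank_eigenspace_submatrix (M : Matrix V V K) (e : W ≃ V) (μ : K) :
    Module.finrank K (eigenspace (toLin' (M.submatrix e e)) μ) =
      Module.finrank K (eigenspace (toLin' M) μ) := by
  have hmap : (eigenspace (toLin' (M.submatrix e e)) μ).map
      (LinearEquiv.funCongrLeft K K e.symm).toLinearMap = eigenspace (toLin' M) μ := by
    ext f
    rw [Submodule.mem_map_equiv, mem_eigenspace_iff, mem_eigenspace_iff, toLin'_apply,
      toLin'_apply, submatrix_mulVec_equiv]
    change (M *ᵥ ((f ∘ e) ∘ e.symm)) ∘ e = (μ • f) ∘ e ↔ _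
    rw [Function.comp_assoc, e.self_comp_symm, Function.comp_id,
      e.surjective.injective_comp_right.eq_iff]
  rw [← hmap, LinearEquiv.finrank_map_eq]

theorem ne_submatrix_of_eigenspace_lt {M M' : Matrix V V K} {μ : K}
    (h : eigenspace (toLin' M) μ < eigenspace (toLin' M') μ) (e : V ≃ V) :
    M' ≠ M.submatrix e e := by
  rintro rfl
  exact (Submodule.finrank_lt_finrank_of_lt h).ne' (finrank_eigenspace_submatrix M e μ)

-- For an eigenvector `f`, the difference `f ∘ T - f` is an antisymmetric eigenvector, so `hanti`
-- makes every eigenvector of `M` symmetric.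
theorem eigenspace_lt_of_symmetric_of_antisymmetric {M M' : Matrix V V K} {T : V ≃ V} {μ : K}
    (hT : Function.Involutive T) (hM : M.submatrix T T = M)
    (hsymm : ∀ f, f ∘ T = f → M' *ᵥ f = M *ᵥ f)
    (hanti : ∀ f, f ∘ T = -f → M *ᵥ f = μ • f → f = 0)
    {w : V → K} (hw : M' *ᵥ w = μ • w) (hwT : w ∘ T ≠ w) :
    eigenspace (toLin' M) μ < eigenspace (toLin' M') μ := by
  have symmetric_of_eigenvector {f : V → K} (hf : M *ᵥ f = μ • f) : f ∘ T = f := by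
    have hfT : M *ᵥ (f ∘ T) = μ • (f ∘ T) := by
      conv_lhs => rw [← hM]
      rw [submatrix_mulVec_equiv, Function.comp_assoc, T.self_comp_symm, Function.comp_id, hf]
      rfl
    refine sub_eq_zero.1 (hanti _ ?_ ?_)
    · funext x
      simp [hT x]
    · rw [mulVec_sub, hfT, hf, smul_sub]
  refine SetLike.lt_iff_le_and_exists.2 ⟨fun f hf ↦ ?_, w, ?_, fun hwM ↦ hwT ?_⟩
  · rw [mem_eigenspace_iff, toLin'_apply] at hf ⊢
    rw [hsymm f (symmetric_of_eigenvector hf), hf]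
  · rwa [mem_eigenspace_iff, toLin'_apply]
  · rw [mem_eigenspace_iff, toLin'_apply] at hwM
    exact symmetric_of_eigenvector hwM

end Spectral

section TFIsomorphism

variable {V W R : Type*} {G : SimpleGraph V} {H : SimpleGraph W} [DecidableRel G.Adj]
  [DecidableRel H.Adj] {α β : V ≃ W}

theorem adjMatrix_eq_submatrix [Zero R] [One R] (h : ∀ x y, G.Adj x y ↔ H.Adj (α x) (β y)) :
    G.adjMatrix R = (H.adjMatrix R).submatrix α β := by
  ext x y
  simp [SimpleGraph.adjMatrix_apply, h]

-- As `A_G` is symmetric, `A_G ^ 2 = A_G * A_Gᵀ`, and in this product the second bijection cancels.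
theorem adjMatrix_mul_self_eq_submatrix [Fintype V] [Fintype W] [NonAssocSemiring R]
    (h : ∀ x y, G.Adj x y ↔ H.Adj (α x) (β y)) :
    G.adjMatrix R * G.adjMatrix R = (H.adjMatrix R * H.adjMatrix R).submatrix α α := by
  calc G.adjMatrix R * G.adjMatrix R
      = G.adjMatrix R * (G.adjMatrix R)ᵀ := by rw [SimpleGraph.transpose_adjMatrix]
    _ = (H.adjMatrix R).submatrix α β * (H.adjMatrix R).submatrix β α := by
        rw [adjMatrix_eq_submatrix h, transpose_submatrix, SimpleGraph.transpose_adjMatrix]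
    _ = (H.adjMatrix R * H.adjMatrix R).submatrix α α := submatrix_mul_equiv ..

end TFIsomorphism

-- Along a coset of `⟨c⟩` the function is an arithmetic progression, and the progression closes up.
theorem periodic_of_add_sub_eq_two_nsmul {A B : Type*} [AddGroup A] [Finite A] [AddCommGroup B]
    [IsAddTorsionFree B] {g : A → B} {c : A}
    (h : ∀ x, g (x + c) + g (x - c) = 2 • g x) : Function.Periodic g c := by
  intro x
  have arith (j : ℕ) : g (x + j • c) = g x + j • (g (x + c) - g x) ∧
      g (x + (j + 1) • c) = g x + (j + 1) • (g (x + c) - g x) := by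
    induction j with
    | zero => simp
    | succ j ih =>
      refine ⟨ih.2, ?_⟩
      have hj := h (x + (j + 1) • c)
      rw [add_assoc, ← succ_nsmul, succ_nsmul c j, ← add_assoc x, add_sub_cancel_right, add_assoc x,
        ← succ_nsmul, ih.1, ih.2, ← eq_sub_iff_add_eq] at hj
      rw [hj]
      module
  have hzero := (arith (addOrderOf c)).1
  rw [addOrderOf_nsmul_eq_zero, add_zero, left_eq_add, smul_eq_zero] at hzero
  exact sub_eq_zero.1 (hzero.resolve_left (addOrderOf_pos c).ne')

section Circuit

variable {k n : ℕ}

/-- The antipodal shift `kn` of the circuit `C_{2kn}`. -/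
def halfTurn (k n : ℕ) : ZMod (2 * k * n) := ((k * n : ℕ) : ZMod (2 * k * n))

/-- The double covering `C_{2kn} → C_{kn}` that identifies antipodal circuit vertices. -/
def residue (k n : ℕ) : ZMod (2 * k * n) →+* ZMod (k * n) :=
  ZMod.castHom ⟨2, by ring⟩ _

@[simp]
theorem halfTurn_add_halfTurn : halfTurn k n + halfTurn k n = 0 := by
  rw [halfTurn, ← Nat.cast_add, ← two_mul, ← mul_assoc, ZMod.natCast_self]

@[simp]
theorem add_halfTurn_add_halfTurn (m : ZMod (2 * k * n)) :
    m + halfTurn k n + halfTurn k n = m := by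
  rw [add_assoc, halfTurn_add_halfTurn, add_zero]

@[simp]
theorem residue_halfTurn : residue k n (halfTurn k n) = 0 := by
  rw [halfTurn, map_natCast, ZMod.natCast_self]

theorem residue_eq_residue_iff {x y : ZMod (2 * k * n)} :
    residue k n x = residue k n y ↔ x = y ∨ x = y + halfTurn k n := by
  refine ⟨fun h ↦ ?_, by rintro (rfl | rfl) <;> simp⟩
  obtain ⟨a, ha⟩ := ZMod.intCast_surjective (x - y)
  have hdvd : ((k * n : ℕ) : ℤ) ∣ a := by
    rw [← ZMod.intCast_zmod_eq_zero_iff_dvd, ← map_intCast (residue k n), ha, map_sub, h, sub_self]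
  obtain ⟨b, rfl⟩ := hdvd
  have hx : x = y + halfTurn k n * b := by
    rw [← sub_eq_iff_eq_add', ← ha, Int.cast_mul, Int.cast_natCast, halfTurn]
  obtain ⟨c, rfl | rfl⟩ := b.even_or_odd'
  · left
    push_cast at hx
    linear_combination hx + c * halfTurn_add_halfTurn (k := k) (n := n)
  · right
    push_cast at hx
    linear_combination hx + c * halfTurn_add_halfTurn (k := k) (n := n)

theorem halfTurn_ne_zero [NeZero k] [NeZero n] : halfTurn k n ≠ 0 := by
  rw [halfTurn, Ne, ZMod.natCast_eq_zero_iff]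
  intro h
  have := Nat.le_of_dvd (Nat.pos_of_neZero _) h
  have := Nat.pos_of_neZero (k * n)
  rw [mul_assoc] at *
  omega

/-- A permutation of the circuit vertices of `C_{2kn}` that lifts the rotation `a ↦ a + 1` of
`C_{kn}`. Its cycles form a double cover of `C_{kn}`: a single cycle for `CG_k(n)`, two disjoint
cycles for `CG'_k(n)`. -/
def IsLift (σ : Equiv.Perm (ZMod (2 * k * n))) : Prop :=
  ∀ m, residue k n (σ m) = residue k n m + 1

namespace IsLift

variable {σ : Equiv.Perm (ZMod (2 * k * n))}

theorem residue_symm_apply (hσ : IsLift σ) (m : ZMod (2 * k * n)) :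
    residue k n (σ.symm m) = residue k n m - 1 := by
  rw [eq_sub_iff_add_eq, ← hσ, σ.apply_symm_apply]

theorem apply_apply_ne (hσ : IsLift σ) (hkn : 3 ≤ k * n) (m : ZMod (2 * k * n)) :
    σ (σ m) ≠ m := by
  intro h
  have htwo : ((2 : ℕ) : ZMod (k * n)) = 0 := by
    have hres := congrArg (residue k n) h
    rw [hσ, hσ, add_assoc, add_eq_left] at hres
    rw [← hres]
    norm_num
  rw [ZMod.natCast_eq_zero_iff] at htwo
  exact absurd (Nat.le_of_dvd two_pos htwo) (by omega)

theorem apply_ne (hσ : IsLift σ) (hkn : 3 ≤ k * n) (m : ZMod (2 * k * n)) : σ m ≠ m :=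
  fun h ↦ hσ.apply_apply_ne hkn m (by rw [h, h])

variable [NeZero k] [NeZero n]

theorem apply_add_halfTurn (hσ : IsLift σ) (m : ZMod (2 * k * n)) :
    σ (m + halfTurn k n) = σ m + halfTurn k n := by
  have hres : residue k n (σ (m + halfTurn k n)) = residue k n (σ m) := by simp [hσ _]
  exact (residue_eq_residue_iff.1 hres).resolve_left (σ.injective.ne (by simp [halfTurn_ne_zero]))

end IsLift

theorem isLift_addRight_one : IsLift (Equiv.addRight (1 : ZMod (2 * k * n))) :=
  fun m ↦ by simp

end Circuit

section Sheets

variable {k n : ℕ} [NeZero k] [NeZero n]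

/-- The sheet `s ∈ ZMod 2` of a circuit vertex `u_{s·kn+a}`, `0 ≤ a < kn`. -/
def sheet (m : ZMod (2 * k * n)) : ZMod 2 := ((m.val / (k * n) : ℕ) : ZMod 2)

theorem residue_eq_natCast_val (m : ZMod (2 * k * n)) :
    residue k n m = ((m.val : ℕ) : ZMod (k * n)) := by
  rw [← map_natCast (residue k n), ZMod.natCast_zmod_val]

theorem sheet_eq_sheet_iff {m m' : ZMod (2 * k * n)} :
    sheet m = sheet m' ↔ m.val / (k * n) = m'.val / (k * n) := by
  have val_div_lt (x : ZMod (2 * k * n)) : x.val / (k * n) < 2 := by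
    rw [Nat.div_lt_iff_lt_mul (Nat.pos_of_neZero _), ← mul_assoc]
    exact x.val_lt
  rw [sheet, sheet, ZMod.natCast_eq_natCast_iff', Nat.mod_eq_of_lt (val_div_lt m),
    Nat.mod_eq_of_lt (val_div_lt m')]

theorem sheet_residue_bijective :
    Function.Bijective fun m : ZMod (2 * k * n) ↦ (sheet m, residue k n m) := by
  refine (Fintype.bijective_iff_injective_and_card _).2 ⟨fun m m' h ↦ ?_, ?_⟩
  · obtain ⟨hsheet, hres⟩ := Prod.mk.inj h
    rw [sheet_eq_sheet_iff] at hsheet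
    rw [residue_eq_natCast_val, residue_eq_natCast_val, ZMod.natCast_eq_natCast_iff'] at hres
    apply ZMod.val_injective
    rw [← Nat.div_add_mod m.val (k * n), hsheet, hres, Nat.div_add_mod]
  · simp [ZMod.card, mul_assoc]

/-- The coordinates `(s, a)` of a circuit vertex `u_{s·kn+a}`. -/
noncomputable def sheetEquiv : ZMod (2 * k * n) ≃ ZMod 2 × ZMod (k * n) :=
  Equiv.ofBijective _ sheet_residue_bijective

@[simp]
theorem sheetEquiv_apply (m : ZMod (2 * k * n)) : sheetEquiv m = (sheet m, residue k n m) :=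
  rfl

theorem sheet_add_halfTurn (m : ZMod (2 * k * n)) : sheet (m + halfTurn k n) = sheet m + 1 := by
  have hne : sheet (m + halfTurn k n) ≠ sheet m := fun h ↦
    halfTurn_ne_zero (add_eq_left.1 (sheetEquiv.injective (Prod.ext h (by simp))))
  generalize sheet (m + halfTurn k n) = s at *
  generalize sheet m = s' at *
  revert s s'
  decide

/-- The successor map of the two disjoint cycles of `CG'_k(n)`: `(s, a) ↦ (s, a + 1)`. -/
noncomputable def sheetSucc : Equiv.Perm (ZMod (2 * k * n)) :=
  sheetEquiv.symm.permCongr ((Equiv.refl _).prodCongr (Equiv.addRight 1))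

theorem sheetEquiv_sheetSucc (m : ZMod (2 * k * n)) :
    sheetEquiv (sheetSucc m) = (sheet m, residue k n m + 1) :=
  sheetEquiv.apply_symm_apply _

theorem sheet_sheetSucc (m : ZMod (2 * k * n)) : sheet (sheetSucc m) = sheet m :=
  congrArg Prod.fst (sheetEquiv_sheetSucc m)

theorem isLift_sheetSucc : IsLift (sheetSucc (k := k) (n := n)) :=
  fun m ↦ congrArg Prod.snd (sheetEquiv_sheetSucc m)

theorem eq_sheetSucc_iff {m m' : ZMod (2 * k * n)} :
    m' = sheetSucc m ↔ m.val / (k * n) = m'.val / (k * n) ∧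
      m'.val % (k * n) = (m.val % (k * n) + 1) % (k * n) := by
  rw [← sheetEquiv.apply_eq_iff_eq, sheetEquiv_sheetSucc, sheetEquiv_apply, Prod.mk.injEq,
    eq_comm, sheet_eq_sheet_iff, residue_eq_natCast_val, residue_eq_natCast_val, ← Nat.cast_one,
    ← Nat.cast_add, ZMod.natCast_eq_natCast_iff', Nat.mod_add_mod]

end Sheets

section Twist

variable {k n : ℕ} (hodd : Odd (k * n))

/-- For odd `kn`, the Chinese remainder coordinates `(m mod 2, m mod kn)` of a circuit vertex. -/
def parityEquiv : ZMod (2 * k * n) ≃+* ZMod 2 × ZMod (k * n) :=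
  (ZMod.ringEquivCongr (mul_assoc 2 k n)).trans
    (ZMod.chineseRemainder (Nat.coprime_two_left.2 hodd))

theorem parityEquiv_snd (m : ZMod (2 * k * n)) :
    (parityEquiv hodd m).2 = residue k n m :=
  RingHom.congr_fun (Subsingleton.elim
    ((RingHom.snd _ _).comp (parityEquiv hodd).toRingHom) (residue k n)) m

theorem parityEquiv_halfTurn : parityEquiv hodd (halfTurn k n) = (1, 0) := by
  rw [halfTurn, map_natCast]
  exact Prod.ext ((ZMod.natCast_eq_one_iff_odd).2 hodd) (ZMod.natCast_self _)

variable [NeZero k] [NeZero n]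

/-- The permutation of the circuit, for odd `kn`, that moves each vertex within its antipodal pair
so that its parity becomes its former sheet. -/
noncomputable def twist : Equiv.Perm (ZMod (2 * k * n)) :=
  sheetEquiv.trans (parityEquiv hodd).symm.toEquiv

theorem parityEquiv_twist (m : ZMod (2 * k * n)) :
    parityEquiv hodd (twist hodd m) = (sheet m, residue k n m) :=
  (parityEquiv hodd).apply_symm_apply _

theorem residue_twist (m : ZMod (2 * k * n)) :
    residue k n (twist hodd m) = residue k n m := by
  rw [← parityEquiv_snd hodd, parityEquiv_twist]

-- Both `1` and the half turn change the parity, while `sheetSucc` preserves the sheet.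
theorem twist_add_one (m : ZMod (2 * k * n)) :
    twist hodd m + 1 = twist hodd (sheetSucc m) + halfTurn k n := by
  apply (parityEquiv hodd).injective
  rw [map_add, map_add, map_one, parityEquiv_halfTurn, parityEquiv_twist, parityEquiv_twist,
    sheet_sheetSucc, isLift_sheetSucc]
  ext <;> simp

end Twist

section CoverGraph

variable {k n : ℕ}

/-- Edge relation (before symmetrization) of `coverGraph`; a leaf `ℓ_{i,j}` is joined to the two
circuit vertices above `i + j·n ∈ ZMod (kn)`. -/
def coverRel (σ : Equiv.Perm (ZMod (2 * k * n))) : ClawVertK k n → ClawVertK k n → Prop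
  | .circ m, .circ m' => m' = σ m
  | .centre i, .leaf i' _ => i = i'
  | .leaf i j, .circ m => residue k n m = (i : ℕ) + (j : ℕ) * (n : ℕ)
  | _, _ => False

/-- The common generalization of `CG_k(n)` and `CG'_k(n)` in which the circuit edges are
`u_m ~ u_{σ m}` for an arbitrary permutation `σ`. -/
def coverGraph (σ : Equiv.Perm (ZMod (2 * k * n))) : SimpleGraph (ClawVertK k n) :=
  SimpleGraph.fromRel (coverRel σ)

theorem eq_or_eq_add_halfTurn_iff (m : ZMod (2 * k * n)) (i j : ℕ) :
    (m = i + j * n ∨ m = i + j * n + ((k * n : ℕ) : ZMod (2 * k * n))) ↔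
      residue k n m = i + j * n := by
  rw [← halfTurn, ← residue_eq_residue_iff]
  simp only [map_add, map_mul, map_natCast]

theorem CGk_eq_coverGraph : CGk k n = coverGraph (Equiv.addRight 1) := by
  refine congrArg SimpleGraph.fromRel (funext₂ fun x y ↦ propext ?_)
  cases x <;> cases y <;> first | rfl | exact eq_or_eq_add_halfTurn_iff ..

theorem CGk'_eq_coverGraph [NeZero k] [NeZero n] : CGk' k n = coverGraph sheetSucc := by
  refine congrArg SimpleGraph.fromRel (funext₂ fun x y ↦ propext ?_)
  cases x <;> cases y <;>
    first | rfl | exact eq_or_eq_add_halfTurn_iff .. | exact eq_sheetSucc_iff.symm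

variable {σ σ' : Equiv.Perm (ZMod (2 * k * n))}

theorem coverGraph_adj_circ_circ (hσ : ∀ m, σ m ≠ m) {m m' : ZMod (2 * k * n)} :
    (coverGraph σ).Adj (.circ m) (.circ m') ↔ m' = σ m ∨ m = σ m' := by
  rw [coverGraph, SimpleGraph.fromRel_adj]
  refine and_iff_right_of_imp ?_
  rintro h ⟨⟩
  exact hσ m (h.elim Eq.symm Eq.symm)

theorem coverGraph_adj_circ_leaf {m : ZMod (2 * k * n)} {i : Fin n} {j : Fin k} :
    (coverGraph σ).Adj (.circ m) (.leaf i j) ↔ residue k n m = (i : ℕ) + (j : ℕ) * (n : ℕ) := by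
  simp [coverGraph, coverRel]

theorem coverGraph_adj_congr {x y : ClawVertK k n} (hx : ∀ m, x ≠ .circ m) :
    (coverGraph σ).Adj x y ↔ (coverGraph σ').Adj x y := by
  cases x <;> cases y <;> first | rfl | simp at hx

/-- The permutation of the vertices that applies `π` to the circuit vertices and fixes all leaves
and centres. -/
def mapCirc (π : Equiv.Perm (ZMod (2 * k * n))) : Equiv.Perm (ClawVertK k n) where
  toFun
    | .circ m => .circ (π m)
    | x => x
  invFun
    | .circ m => .circ (π.symm m)
    | x => x
  left_inv x := by cases x <;> simp
  right_inv x := by cases x <;> simp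

theorem coverGraph_adj_iff_mapCirc {π ρ : Equiv.Perm (ZMod (2 * k * n))}
    (hσ : ∀ m, σ m ≠ m) (hσ' : ∀ m, σ' m ≠ m)
    (hπ : ∀ m, residue k n (π m) = residue k n m) (hρ : ∀ m, residue k n (ρ m) = residue k n m)
    (hπρ : ∀ m, σ (π m) = ρ (σ' m)) (hρπ : ∀ m, σ (ρ m) = π (σ' m)) (x y : ClawVertK k n) :
    (coverGraph σ').Adj x y ↔ (coverGraph σ).Adj (mapCirc π x) (mapCirc ρ y) := by
  rcases x with m | _ | _ <;> rcases y with m' | _ | _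
  · change _ ↔ (coverGraph σ).Adj (.circ (π m)) (.circ (ρ m'))
    rw [coverGraph_adj_circ_circ hσ', coverGraph_adj_circ_circ hσ, hπρ, hρπ,
      ρ.apply_eq_iff_eq, π.apply_eq_iff_eq]
  · change _ ↔ (coverGraph σ).Adj (.circ (π m)) (.leaf _ _)
    rw [coverGraph_adj_circ_leaf, coverGraph_adj_circ_leaf, hπ]
  case leaf.circ =>
    change _ ↔ (coverGraph σ).Adj (.leaf _ _) (.circ (ρ m'))
    rw [SimpleGraph.adj_comm, coverGraph_adj_circ_leaf, SimpleGraph.adj_comm,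
      coverGraph_adj_circ_leaf, hρ]
  case circ.centre | centre.circ => simp [coverGraph, coverRel, mapCirc]
  all_goals rfl

/-- The half turn of the vertex set, which swaps antipodal circuit vertices. -/
def halfTurnPerm (k n : ℕ) : Equiv.Perm (ClawVertK k n) :=
  mapCirc (Equiv.addRight (halfTurn k n))

theorem halfTurnPerm_involutive : Function.Involutive (halfTurnPerm k n) := by
  rintro (m | _ | _)
  · exact congrArg ClawVertK.circ (add_halfTurn_add_halfTurn m)
  all_goals rfl

theorem apply_circ_eq_of_symmetric {R : Type*} {f : ClawVertK k n → R}
    (hf : f ∘ halfTurnPerm k n = f) {m m' : ZMod (2 * k * n)} (h : residue k n m = residue k n m') :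
    f (.circ m) = f (.circ m') := by
  obtain rfl | rfl := residue_eq_residue_iff.1 h
  · rfl
  · exact congrFun hf (.circ m')

section Antisymmetric

variable {R : Type*} [AddGroup R] [IsAddTorsionFree R] {f : ClawVertK k n → R}

theorem apply_eq_zero_of_antisymmetric (hf : f ∘ halfTurnPerm k n = -f) {x : ClawVertK k n}
    (hx : halfTurnPerm k n x = x) : f x = 0 := by
  have h := congrFun hf x
  rw [Function.comp_apply, hx] at h
  exact self_eq_neg.1 h

theorem eq_zero_of_antisymmetric_of_periodic (hf : f ∘ halfTurnPerm k n = -f)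
    (hper : Function.Periodic (fun m ↦ f (.circ m)) (halfTurn k n)) : f = 0 := by
  funext x
  cases x with
  | circ m => exact self_eq_neg.1 ((hper m).symm.trans (congrFun hf (.circ m)))
  | leaf i j => exact apply_eq_zero_of_antisymmetric hf rfl
  | centre i => exact apply_eq_zero_of_antisymmetric hf rfl

end Antisymmetric

variable [NeZero k] [NeZero n]

theorem IsLift.coverGraph_adj_halfTurnPerm (hσ : IsLift σ) (hkn : 3 ≤ k * n)
    (x y : ClawVertK k n) :
    (coverGraph σ).Adj x y ↔ (coverGraph σ).Adj (halfTurnPerm k n x) (halfTurnPerm k n y) :=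
  coverGraph_adj_iff_mapCirc (hσ.apply_ne hkn) (hσ.apply_ne hkn) (by simp) (by simp)
    hσ.apply_add_halfTurn hσ.apply_add_halfTurn x y

theorem exists_tf_isomorphism_of_odd (hkn : 3 ≤ k * n) (hodd : Odd (k * n)) :
    ∃ α β : ClawVertK k n ≃ ClawVertK k n,
      ∀ x y, (CGk' k n).Adj x y ↔ (CGk k n).Adj (α x) (β y) := by
  rw [CGk_eq_coverGraph, CGk'_eq_coverGraph]
  refine ⟨mapCirc (twist hodd), mapCirc ((twist hodd).trans (Equiv.addRight (halfTurn k n))),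
    coverGraph_adj_iff_mapCirc (isLift_addRight_one.apply_ne hkn) (isLift_sheetSucc.apply_ne hkn)
      (residue_twist hodd) (fun m ↦ ?_) (twist_add_one hodd) (fun m ↦ ?_)⟩
  · simp [residue_twist]
  · change twist hodd m + halfTurn k n + 1 = _
    rw [add_right_comm, twist_add_one, add_halfTurn_add_halfTurn]

end CoverGraph

section AdjacencyOperator

variable {k n : ℕ} [NeZero k] [NeZero n] {σ σ' : Equiv.Perm (ZMod (2 * k * n))}

noncomputable instance : Fintype (ClawVertK k n) :=
  Fintype.ofSurjective
    (Sum.elim .circ (Sum.elim (fun p ↦ .leaf p.1 p.2) .centre) :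
      ZMod (2 * k * n) ⊕ (Fin n × Fin k) ⊕ Fin n → ClawVertK k n) <| by
    rintro (m | ⟨i, j⟩ | i)
    exacts [⟨.inl m, rfl⟩, ⟨.inr (.inl (i, j)), rfl⟩, ⟨.inr (.inr i), rfl⟩]

noncomputable instance : DecidableRel (coverGraph σ).Adj := Classical.decRel _

section Semiring

variable {R : Type*} [NonAssocSemiring R]

theorem adjMatrix_coverGraph_mulVec_of_ne_circ (f : ClawVertK k n → R) {x : ClawVertK k n}
    (hx : ∀ m, x ≠ .circ m) :
    ((coverGraph σ).adjMatrix R *ᵥ f) x = ((coverGraph σ').adjMatrix R *ᵥ f) x := by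
  simp only [SimpleGraph.adjMatrix_mulVec_apply, SimpleGraph.neighborFinset_eq_filter,
    coverGraph_adj_congr (σ := σ) (σ' := σ') hx]

-- `coverGraph 1` has no circuit edges, so the last summand collects the leaves attached to `m`.
theorem adjMatrix_coverGraph_mulVec_circ (hσ : ∀ m, σ (σ m) ≠ m) (f : ClawVertK k n → R)
    (m : ZMod (2 * k * n)) :
    ((coverGraph σ).adjMatrix R *ᵥ f) (.circ m) =
      f (.circ (σ m)) + (f (.circ (σ.symm m)) + ((coverGraph 1).adjMatrix R *ᵥ f) (.circ m)) := by
  have not_adj_one (m' : ZMod (2 * k * n)) : ¬(coverGraph 1).Adj (.circ m) (.circ m') := by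
    simp +contextual [coverGraph, coverRel, eq_comm]
  have neighbors : (coverGraph σ).neighborFinset (.circ m) =
      insert (.circ (σ m)) (insert (.circ (σ.symm m))
        ((coverGraph 1).neighborFinset (.circ m))) := by
    ext y
    simp only [SimpleGraph.mem_neighborFinset, Finset.mem_insert]
    cases y with
    | circ m' =>
      simp [coverGraph_adj_circ_circ (fun x h ↦ hσ x (by rw [h, h])), not_adj_one,
        σ.eq_symm_apply, eq_comm]
    | leaf i j => simp [coverGraph_adj_circ_leaf]
    | centre i => simp [coverGraph, coverRel]
  have hne : σ m ≠ σ.symm m := fun h ↦ hσ m (by rw [h, σ.apply_symm_apply])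
  simp only [SimpleGraph.adjMatrix_mulVec_apply]
  rw [neighbors, Finset.sum_insert (by simp [hne, not_adj_one]),
    Finset.sum_insert (by simp [not_adj_one])]

theorem adjMatrix_coverGraph_mulVec_congr (hkn : 3 ≤ k * n) (hσ : IsLift σ) (hσ' : IsLift σ')
    {f : ClawVertK k n → R} (hf : f ∘ halfTurnPerm k n = f) :
    (coverGraph σ).adjMatrix R *ᵥ f = (coverGraph σ').adjMatrix R *ᵥ f := by
  funext x
  cases x with
  | circ m =>
    rw [adjMatrix_coverGraph_mulVec_circ (hσ.apply_apply_ne hkn),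
      adjMatrix_coverGraph_mulVec_circ (hσ'.apply_apply_ne hkn),
      apply_circ_eq_of_symmetric hf ((hσ m).trans (hσ' m).symm),
      apply_circ_eq_of_symmetric hf
        ((hσ.residue_symm_apply m).trans (hσ'.residue_symm_apply m).symm)]
  | leaf i j => exact adjMatrix_coverGraph_mulVec_of_ne_circ f (by simp)
  | centre i => exact adjMatrix_coverGraph_mulVec_of_ne_circ f (by simp)

theorem IsLift.adjMatrix_submatrix_halfTurnPerm (hσ : IsLift σ) (hkn : 3 ≤ k * n) :
    ((coverGraph σ).adjMatrix R).submatrix (halfTurnPerm k n) (halfTurnPerm k n) =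
      (coverGraph σ).adjMatrix R :=
  (adjMatrix_eq_submatrix (hσ.coverGraph_adj_halfTurnPerm hkn)).symm

theorem IsLift.adjMatrix_mulVec_comp_halfTurnPerm (hσ : IsLift σ) (hkn : 3 ≤ k * n)
    (f : ClawVertK k n → R) :
    ((coverGraph σ).adjMatrix R *ᵥ f) ∘ halfTurnPerm k n =
      (coverGraph σ).adjMatrix R *ᵥ (f ∘ halfTurnPerm k n) := by
  conv_rhs => rw [← hσ.adjMatrix_submatrix_halfTurnPerm hkn]
  rw [submatrix_mulVec_equiv, Function.comp_assoc, Equiv.self_comp_symm, Function.comp_id]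

end Semiring

section Eigenvectors

variable {K : Type*} [Field K] {f : ClawVertK k n → K}

theorem IsLift.adjMatrix_mulVec_antisymmetric (hσ : IsLift σ) (hkn : 3 ≤ k * n)
    (hf : f ∘ halfTurnPerm k n = -f) :
    ((coverGraph σ).adjMatrix K *ᵥ f) ∘ halfTurnPerm k n =
      -((coverGraph σ).adjMatrix K *ᵥ f) := by
  rw [hσ.adjMatrix_mulVec_comp_halfTurnPerm hkn, hf, mulVec_neg]

/-- The function on the vertices that is `±1` on the two cycles of `CG'_k(n)` and vanishes on the
leaves and centres. -/
noncomputable def sheetSign : ClawVertK k n → K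
  | .circ m => if sheet m = 0 then 1 else -1
  | _ => 0

theorem sheetSign_antisymmetric :
    (sheetSign : ClawVertK k n → K) ∘ halfTurnPerm k n = -sheetSign := by
  funext x
  cases x with
  | circ m =>
    change (if sheet (m + halfTurn k n) = 0 then (1 : K) else -1) =
      -(if sheet m = 0 then (1 : K) else -1)
    rw [sheet_add_halfTurn]
    generalize sheet m = s
    obtain rfl | rfl : s = 0 ∨ s = 1 := by decide +revert
    · simp
    · simp [CharTwo.add_self_eq_zero]
  | leaf i j => exact neg_zero.symm
  | centre i => exact neg_zero.symm

variable [CharZero K]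

theorem adjMatrix_coverGraph_mulVec_circ_of_antisymmetric (hσ : ∀ m, σ (σ m) ≠ m)
    (hf : f ∘ halfTurnPerm k n = -f) (m : ZMod (2 * k * n)) :
    ((coverGraph σ).adjMatrix K *ᵥ f) (.circ m) = f (.circ (σ m)) + f (.circ (σ.symm m)) := by
  have hleaves : ((coverGraph 1).adjMatrix K *ᵥ f) (.circ m) = 0 := by
    rw [SimpleGraph.adjMatrix_mulVec_apply]
    refine Finset.sum_eq_zero fun y hy ↦ ?_
    rw [SimpleGraph.mem_neighborFinset] at hy
    cases y with
    | circ m' => simp_all [coverGraph, coverRel, eq_comm]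
    | leaf i j => exact apply_eq_zero_of_antisymmetric hf rfl
    | centre i => exact apply_eq_zero_of_antisymmetric hf rfl
  rw [adjMatrix_coverGraph_mulVec_circ hσ, hleaves, add_zero]

theorem eq_zero_of_antisymmetric_of_adjMatrix_mulVec_eq (hkn : 3 ≤ k * n)
    (hf : f ∘ halfTurnPerm k n = -f)
    (heig : (coverGraph (Equiv.addRight 1)).adjMatrix K *ᵥ f = (2 : K) • f) : f = 0 := by
  have hper : Function.Periodic (fun m ↦ f (.circ m)) 1 := by
    refine periodic_of_add_sub_eq_two_nsmul fun m ↦ ?_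
    have h := congrFun heig (.circ m)
    rw [adjMatrix_coverGraph_mulVec_circ_of_antisymmetric
      (isLift_addRight_one.apply_apply_ne hkn) hf] at h
    simpa [sub_eq_add_neg] using h
  refine eq_zero_of_antisymmetric_of_periodic hf ?_
  simpa [halfTurn] using hper.nsmul (k * n)

theorem eq_zero_of_antisymmetric_of_adjMatrix_mul_self_mulVec_eq (hkn : 3 ≤ k * n)
    (heven : Even (k * n)) (hf : f ∘ halfTurnPerm k n = -f)
    (heig : ((coverGraph (Equiv.addRight 1)).adjMatrix K *
      (coverGraph (Equiv.addRight 1)).adjMatrix K) *ᵥ f = (4 : K) • f) : f = 0 := by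
  have hσ : IsLift (Equiv.addRight (1 : ZMod (2 * k * n))) := isLift_addRight_one
  have hper : Function.Periodic (fun m ↦ f (.circ m)) (1 + 1) := by
    refine periodic_of_add_sub_eq_two_nsmul fun m ↦ ?_
    have h := congrFun heig (.circ m)
    rw [← mulVec_mulVec, adjMatrix_coverGraph_mulVec_circ_of_antisymmetric
      (hσ.apply_apply_ne hkn) (hσ.adjMatrix_mulVec_antisymmetric hkn hf),
      adjMatrix_coverGraph_mulVec_circ_of_antisymmetric (hσ.apply_apply_ne hkn) hf,
      adjMatrix_coverGraph_mulVec_circ_of_antisymmetric (hσ.apply_apply_ne hkn) hf] at h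
    simp only [Equiv.coe_addRight, Equiv.addRight_symm, ← sub_eq_add_neg, sub_add_cancel,
      add_sub_cancel_right, Pi.smul_apply, smul_eq_mul] at h
    rw [← add_assoc, ← sub_sub, two_nsmul]
    linear_combination h
  refine eq_zero_of_antisymmetric_of_periodic hf ?_
  obtain ⟨j, hj⟩ := heven
  simpa [halfTurn, hj, mul_add] using hper.nsmul j

theorem adjMatrix_mulVec_sheetSign (hkn : 3 ≤ k * n) :
    (coverGraph sheetSucc).adjMatrix K *ᵥ (sheetSign : ClawVertK k n → K) =
      (2 : K) • sheetSign := by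
  have hanti := isLift_sheetSucc.adjMatrix_mulVec_antisymmetric hkn
    (sheetSign_antisymmetric (k := k) (n := n) (K := K))
  funext x
  cases x with
  | circ m =>
    have hsymm : sheet (sheetSucc.symm m) = sheet m := by
      rw [← sheet_sheetSucc, Equiv.apply_symm_apply]
    rw [adjMatrix_coverGraph_mulVec_circ_of_antisymmetric (isLift_sheetSucc.apply_apply_ne hkn)
      sheetSign_antisymmetric]
    simp only [sheetSign, sheet_sheetSucc, hsymm, Pi.smul_apply, smul_eq_mul, two_mul]
  | leaf i j =>
    rw [apply_eq_zero_of_antisymmetric hanti rfl]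
    simp [sheetSign]
  | centre i =>
    rw [apply_eq_zero_of_antisymmetric hanti rfl]
    simp [sheetSign]

theorem sheetSign_not_symmetric :
    (sheetSign : ClawVertK k n → K) ∘ halfTurnPerm k n ≠ sheetSign := by
  intro h
  have h0 := self_eq_neg.1 (h.symm.trans sheetSign_antisymmetric)
  have := congrFun h0 (.circ 0)
  simp [sheetSign, sheet] at this

variable (K)

theorem eigenspace_adjMatrix_lt (hkn : 3 ≤ k * n) :
    eigenspace (toLin' ((coverGraph (Equiv.addRight (1 : ZMod (2 * k * n)))).adjMatrix K)) 2 <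
      eigenspace (toLin' ((coverGraph (sheetSucc (k := k) (n := n))).adjMatrix K)) 2 :=
  eigenspace_lt_of_symmetric_of_antisymmetric halfTurnPerm_involutive
    (isLift_addRight_one.adjMatrix_submatrix_halfTurnPerm hkn)
    (fun _ ↦ adjMatrix_coverGraph_mulVec_congr hkn isLift_sheetSucc isLift_addRight_one)
    (fun _ ↦ eq_zero_of_antisymmetric_of_adjMatrix_mulVec_eq hkn)
    (adjMatrix_mulVec_sheetSign hkn) sheetSign_not_symmetric

theorem eigenspace_adjMatrix_mul_self_lt (hkn : 3 ≤ k * n) (heven : Even (k * n)) :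
    let A := (coverGraph (Equiv.addRight (1 : ZMod (2 * k * n)))).adjMatrix K
    let A' := (coverGraph (sheetSucc (k := k) (n := n))).adjMatrix K
    eigenspace (toLin' (A * A)) 4 < eigenspace (toLin' (A' * A')) 4 := by
  intro A A'
  have hA : A.submatrix (halfTurnPerm k n) (halfTurnPerm k n) = A :=
    isLift_addRight_one.adjMatrix_submatrix_halfTurnPerm hkn
  have hAA' {f : ClawVertK k n → K} (hf : f ∘ halfTurnPerm k n = f) : A' *ᵥ f = A *ᵥ f :=
    adjMatrix_coverGraph_mulVec_congr hkn isLift_sheetSucc isLift_addRight_one hf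
  refine eigenspace_lt_of_symmetric_of_antisymmetric (w := sheetSign) halfTurnPerm_involutive ?_
    (fun f hf ↦ ?_) (fun _ ↦ eq_zero_of_antisymmetric_of_adjMatrix_mul_self_mulVec_eq hkn heven)
    ?_ sheetSign_not_symmetric
  · rw [← submatrix_mul_equiv A A _ (halfTurnPerm k n), hA]
  · have hAf : (A *ᵥ f) ∘ halfTurnPerm k n = A *ᵥ f := by
      rw [isLift_addRight_one.adjMatrix_mulVec_comp_halfTurnPerm hkn, hf]
    rw [← mulVec_mulVec, ← mulVec_mulVec, hAA' hf, hAA' hAf]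
  · rw [← mulVec_mulVec, adjMatrix_mulVec_sheetSign hkn, mulVec_smul,
      adjMatrix_mulVec_sheetSign hkn, smul_smul]
    norm_num

end Eigenvectors

theorem isEmpty_iso (hkn : 3 ≤ k * n) : IsEmpty (CGk k n ≃g CGk' k n) := by
  rw [CGk_eq_coverGraph, CGk'_eq_coverGraph]
  exact ⟨fun φ ↦ ne_submatrix_of_eigenspace_lt (eigenspace_adjMatrix_lt ℚ hkn) φ.symm.toEquiv
    (adjMatrix_eq_submatrix fun _ _ ↦ φ.symm.map_rel_iff.symm)⟩

theorem not_exists_tf_isomorphism_of_even (hkn : 3 ≤ k * n) (heven : Even (k * n)) :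
    ¬∃ α β : ClawVertK k n ≃ ClawVertK k n,
      ∀ x y, (CGk' k n).Adj x y ↔ (CGk k n).Adj (α x) (β y) := by
  rw [CGk_eq_coverGraph, CGk'_eq_coverGraph]
  rintro ⟨α, β, h⟩
  exact ne_submatrix_of_eigenspace_lt (eigenspace_adjMatrix_mul_self_lt ℚ hkn heven) α
    (adjMatrix_mul_self_eq_submatrix h)

end AdjacencyOperator

end GeneralizedClaw

theorem generalized_claw_tf_cousins_iff_odd_general (k n : ℕ) (hkn : 3 ≤ k * n) :
    ((∃ α β : ClawVertK k n ≃ ClawVertK k n,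
        ∀ x y : ClawVertK k n, (CGk' k n).Adj x y ↔ (CGk k n).Adj (α x) (β y)) ∧
      IsEmpty (CGk k n ≃g CGk' k n)) ↔ Odd (k * n) := by
  have : NeZero k := ⟨by rintro rfl; simp at hkn⟩
  have : NeZero n := ⟨by rintro rfl; simp at hkn⟩
  refine ⟨fun ⟨htf, _⟩ ↦ ?_, fun hodd ↦
    ⟨GeneralizedClaw.exists_tf_isomorphism_of_odd hkn hodd, GeneralizedClaw.isEmpty_iso hkn⟩⟩
  by_contra hodd
  exact GeneralizedClaw.not_exists_tf_isomorphism_of_even hkn (Nat.not_odd_iff_even.1 hodd) htf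

/-- For odd `k ≥ 3` and `n ≥ 1`, the generalized claw graph `CG_k(n)` and its
companion `CG'_k(n)` are TF-cousins iff `n` is odd. -/
theorem generalized_claw_tf_cousins_iff_odd (k n : ℕ) (hk : 3 ≤ k) (hkodd : Odd k)
    (hn : 1 ≤ n) :
    ((∃ α β : ClawVertK k n ≃ ClawVertK k n,
        ∀ x y : ClawVertK k n, (CGk' k n).Adj x y ↔ (CGk k n).Adj (α x) (β y)) ∧
      IsEmpty (CGk k n ≃g CGk' k n)) ↔ Odd n := by
  rw [generalized_claw_tf_cousins_iff_odd_general k n (by nlinarith), Nat.odd_mul,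
    and_iff_right hkodd]
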